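/- arXiv:1705.01270 — 2 statements merged into one kernel-verified Lean document; each statement's English description precedes it below -/
import Mathlib

section
/- Let (X, 𝔄) be a measurable space with a positive measure m and α : X → X a measurable map, and let A be the linear shift operator mapping a measurable function f to f ∘ α. Then A is bounded on L¹(X, m) if and only if there exists a positive constant C such that m(α⁻¹(G)) ≤ C·m(G) for every measurable set G ∈ 𝔄, and in that case ‖A‖ ≤ C. -/
open MeasureTheory Filter
open scoped ENNReal NNReal

noncomputable section

/-! The condition on `C` says that `m.map α ≤ C • m`. Since composition with `α` is an isometry from
`L^p(m.map α)` to `L^p(m)`, this domination bounds the operator by `C ^ (1 / p)`. Conversely, for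
`p < ∞`, testing a bounded shift operator on the indicator functions of sets of finite measure gives
the domination with `C = ‖A‖ ^ p`, and sets of infinite measure only require `C ≠ 0`. -/

section ShiftOperator

variable {X Y E 𝕜 : Type*} [MeasurableSpace X] [MeasurableSpace Y] {μ : Measure X} {ν : Measure Y}
  {α : X → Y} {p c : ℝ≥0∞} [NormedAddCommGroup E]

theorem map_le_smul_iff (hα : AEMeasurable α μ) :
    μ.map α ≤ c • ν ↔ ∀ G, MeasurableSet G → μ (α ⁻¹' G) ≤ c * ν G := by
  refine Measure.le_iff.trans (forall₂_congr fun G hG => ?_)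
  rw [Measure.map_apply_of_aemeasurable hα hG, Measure.smul_apply, smul_eq_mul]

theorem ae_eq_comp_of_map_le_smul {β : Type*} (hα : AEMeasurable α μ) (hle : μ.map α ≤ c • ν)
    {f g : Y → β} (hfg : f =ᵐ[ν] g) : f ∘ α =ᵐ[μ] g ∘ α :=
  ae_of_ae_map hα ((Measure.absolutelyContinuous_of_le_smul hle).ae_le hfg)

theorem eLpNorm_comp_le_of_map_le_smul (hα : AEMeasurable α μ) (hle : μ.map α ≤ c • ν)
    {f : Y → E} (hf : AEStronglyMeasurable f ν) :
    eLpNorm (f ∘ α) p μ ≤ c ^ (1 / p).toReal * eLpNorm f p ν := by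
  have hf_map : AEStronglyMeasurable f (μ.map α) :=
    hf.mono_ac (Measure.absolutelyContinuous_of_le_smul hle)
  rw [← eLpNorm_map_measure hf_map hα]
  exact eLpNorm_le_of_measure_le_smul hle

theorem memLp_comp_of_map_le_smul (hα : AEMeasurable α μ) (hc : c ≠ ∞) (hle : μ.map α ≤ c • ν)
    {f : Y → E} (hf : MemLp f p ν) : MemLp (f ∘ α) p μ :=
  (hf.of_measure_le_smul hc hle).comp_of_map hα

/-- `IsShiftOperator α A` says that the map `A` between `L^p` spaces is the shift operator
`f ↦ f ∘ α`. All strongly measurable representatives `f` of a class are tested: testing only the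
chosen representative `⇑f` of `f : Lp E p ν` would not force `f ∘ α` to depend only on the class. -/
def IsShiftOperator (α : X → Y) (A : Lp E p ν → Lp E p μ) : Prop :=
  ∀ (f : Y → E) (hf : MemLp f p ν), StronglyMeasurable f → A (hf.toLp f) =ᵐ[μ] f ∘ α

theorem IsShiftOperator.coeFn_ae_eq {A : Lp E p ν → Lp E p μ} (hA : IsShiftOperator α A)
    (f : Lp E p ν) : A f =ᵐ[μ] f ∘ α := by
  simpa only [Lp.toLp_coeFn] using hA f (Lp.memLp f) (Lp.stronglyMeasurable f)

theorem IsShiftOperator.enorm_apply_le {A : Lp E p ν → Lp E p μ} (hA : IsShiftOperator α A)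
    (hα : AEMeasurable α μ) (hle : μ.map α ≤ c • ν) (f : Lp E p ν) :
    ‖A f‖ₑ ≤ c ^ (1 / p).toReal * ‖f‖ₑ := by
  rw [Lp.enorm_def, Lp.enorm_def, eLpNorm_congr_ae (hA.coeFn_ae_eq f)]
  exact eLpNorm_comp_le_of_map_le_smul hα hle (Lp.aestronglyMeasurable f)

theorem IsShiftOperator.norm_apply_le {C : ℝ≥0} {A : Lp E p ν → Lp E p μ}
    (hA : IsShiftOperator α A) (hα : AEMeasurable α μ) (hle : μ.map α ≤ (C : ℝ≥0∞) • ν)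
    (f : Lp E p ν) : ‖A f‖ ≤ (C : ℝ) ^ (1 / p).toReal * ‖f‖ := by
  have h := hA.enorm_apply_le hα hle f
  rw [← ENNReal.coe_rpow_of_nonneg _ ENNReal.toReal_nonneg, enorm_eq_nnnorm, enorm_eq_nnnorm] at h
  exact_mod_cast h

theorem IsShiftOperator.measure_preimage_le [Nontrivial E] {A : Lp E p ν → Lp E p μ}
    (hA : IsShiftOperator α A) (hp₀ : p ≠ 0) (hp : p ≠ ∞) (hα : AEMeasurable α μ) {K : ℝ≥0∞}
    (hK : ∀ f, ‖A f‖ₑ ≤ K * ‖f‖ₑ) {G : Set Y} (hG : MeasurableSet G) (hνG : ν G ≠ ∞) :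
    μ (α ⁻¹' G) ≤ K ^ p.toReal * ν G := by
  obtain ⟨v, hv⟩ := exists_ne (0 : E)
  have h_mem : MemLp (G.indicator fun _ => v) p ν := memLp_indicator_const p hG v (.inr hνG)
  have h_shift : A h_mem.toLp =ᵐ[μ] (α ⁻¹' G).indicator fun _ => v :=
    hA _ h_mem (stronglyMeasurable_const.indicator hG)
  have h_bound : ‖v‖ₑ * μ (α ⁻¹' G) ^ (1 / p.toReal) ≤ ‖v‖ₑ * (K * ν G ^ (1 / p.toReal)) :=
    calc
      ‖v‖ₑ * μ (α ⁻¹' G) ^ (1 / p.toReal) = ‖A h_mem.toLp‖ₑ := by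
        rw [Lp.enorm_def, eLpNorm_congr_ae h_shift,
          eLpNorm_indicator_const₀ (hα.nullMeasurableSet_preimage hG) hp₀ hp]
      _ ≤ K * ‖h_mem.toLp‖ₑ := hK _
      _ = ‖v‖ₑ * (K * ν G ^ (1 / p.toReal)) := by
        rw [Lp.enorm_toLp, eLpNorm_indicator_const hG hp₀ hp, mul_left_comm]
  have hp_pos : 0 < p.toReal := ENNReal.toReal_pos hp₀ hp
  have h_cancel := (ENNReal.mul_le_mul_iff_right (enorm_ne_zero.2 hv) enorm_ne_top).1 h_bound
  rwa [one_div, ENNReal.rpow_inv_le_iff hp_pos, ENNReal.mul_rpow_of_nonneg _ _ hp_pos.le,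
    ENNReal.rpow_inv_rpow hp_pos.ne'] at h_cancel

variable [NontriviallyNormedField 𝕜] [NormedSpace 𝕜 E] [Fact (1 ≤ p)]

theorem exists_isShiftOperator (hα : AEMeasurable α μ) {C : ℝ≥0}
    (hle : μ.map α ≤ (C : ℝ≥0∞) • ν) :
    ∃ A : Lp E p ν →L[𝕜] Lp E p μ, IsShiftOperator α A := by
  have h_mem (f : Lp E p ν) : MemLp (f ∘ α) p μ :=
    memLp_comp_of_map_le_smul hα ENNReal.coe_ne_top hle (Lp.memLp f)
  let A : Lp E p ν →ₗ[𝕜] Lp E p μ :=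
    { toFun := fun f => (h_mem f).toLp
      map_add' := fun f g => by
        rw [← MemLp.toLp_add, MemLp.toLp_eq_toLp_iff]
        exact ae_eq_comp_of_map_le_smul hα hle (Lp.coeFn_add f g)
      map_smul' := fun r f => by
        rw [RingHom.id_apply, ← MemLp.toLp_const_smul, MemLp.toLp_eq_toLp_iff]
        exact ae_eq_comp_of_map_le_smul hα hle (Lp.coeFn_smul r f) }
  have hA : IsShiftOperator α A := fun f hf _ =>
    (h_mem _).coeFn_toLp.trans (ae_eq_comp_of_map_le_smul hα hle hf.coeFn_toLp)
  exact ⟨A.mkContinuous _ (hA.norm_apply_le hα hle), hA⟩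

theorem IsShiftOperator.opNorm_le {A : Lp E p ν →L[𝕜] Lp E p μ} (hA : IsShiftOperator α A)
    (hα : AEMeasurable α μ) {C : ℝ≥0} (hle : μ.map α ≤ (C : ℝ≥0∞) • ν) :
    ‖A‖ ≤ (C : ℝ) ^ (1 / p).toReal :=
  A.opNorm_le_bound (by positivity) (hA.norm_apply_le hα hle)

theorem IsShiftOperator.exists_measure_preimage_le [Nontrivial E] {A : Lp E p ν →L[𝕜] Lp E p μ}
    (hA : IsShiftOperator α A) (hp : p ≠ ∞) (hα : AEMeasurable α μ) :
    ∃ C : ℝ≥0, 0 < C ∧ ∀ G, MeasurableSet G → μ (α ⁻¹' G) ≤ (C : ℝ≥0∞) * ν G := by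
  have hp₀ : p ≠ 0 := (zero_lt_one.trans_le Fact.out).ne'
  refine ⟨‖A‖₊ ^ p.toReal + 1, by positivity, fun G hG => ?_⟩
  obtain hνG | hνG := eq_or_ne (ν G) ∞
  · simp [hνG, ENNReal.mul_top]
  calc
    μ (α ⁻¹' G) ≤ ‖A‖ₑ ^ p.toReal * ν G := hA.measure_preimage_le hp₀ hp hα A.le_opENorm hG hνG
    _ = ↑(‖A‖₊ ^ p.toReal) * ν G := by
      rw [enorm_eq_nnnorm, ENNReal.coe_rpow_of_nonneg _ ENNReal.toReal_nonneg]
    _ ≤ ↑(‖A‖₊ ^ p.toReal + 1) * ν G := by gcongr; exact le_self_add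

theorem shiftOperator_bounded_iff_general [Nontrivial E] (hp : p ≠ ∞) (hα : AEMeasurable α μ) :
    ((∃ A : Lp E p ν →L[𝕜] Lp E p μ, IsShiftOperator α A) ↔
      ∃ C : ℝ≥0, 0 < C ∧ ∀ G, MeasurableSet G → μ (α ⁻¹' G) ≤ (C : ℝ≥0∞) * ν G) ∧
    ∀ C : ℝ≥0, (∀ G, MeasurableSet G → μ (α ⁻¹' G) ≤ (C : ℝ≥0∞) * ν G) →
      ∀ A : Lp E p ν →L[𝕜] Lp E p μ, IsShiftOperator α A → ‖A‖ ≤ (C : ℝ) ^ (1 / p).toReal :=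
  ⟨⟨fun ⟨_, hA⟩ => hA.exists_measure_preimage_le hp hα,
    fun ⟨_, _, hC⟩ => exists_isShiftOperator hα ((map_le_smul_iff hα).2 hC)⟩,
    fun _ hC _ hA => hA.opNorm_le hα ((map_le_smul_iff hα).2 hC)⟩

theorem isShiftOperator_L1_iff {A : Lp ℝ 1 ν → Lp ℝ 1 μ} :
    IsShiftOperator α A ↔
      ∀ (f : Y → ℝ) (hf : Integrable f ν), Measurable f → A (hf.toL1 f) =ᵐ[μ] f ∘ α :=
  ⟨fun hA f hf hfm => hA f (memLp_one_iff_integrable.2 hf) hfm.stronglyMeasurable,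
    fun hA f hf hfm => hA f (memLp_one_iff_integrable.1 hf) hfm.measurable⟩

end ShiftOperator

/-- **Boundedness criterion for the shift operator**: the linear shift operator
`A f = f ∘ α` is bounded on `L¹(X, m)` (i.e. there is a bounded linear operator `A` on
`L¹(X, m)` sending (the class of) every integrable measurable `f` to (the class of)
`f ∘ α`) if and only if there exists a constant `C > 0` such that
`m (α⁻¹ G) ≤ C · m G` for every measurable set `G`; and in that case `‖A‖ ≤ C`. -/
theorem shiftOperator_bounded_iff
    {X : Type*} [MeasurableSpace X] (m : Measure X) (α : X → X)
    (hα : Measurable α) :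
    ((∃ A : Lp ℝ 1 m →L[ℝ] Lp ℝ 1 m,
        ∀ (f : X → ℝ) (hf : Integrable f m), Measurable f →
          ⇑(A (hf.toL1 f)) =ᵐ[m] f ∘ α) ↔
      ∃ C : ℝ≥0, 0 < C ∧ ∀ G : Set X, MeasurableSet G → m (α ⁻¹' G) ≤ (C : ℝ≥0∞) * m G) ∧
    (∀ C : ℝ≥0, 0 < C →
      (∀ G : Set X, MeasurableSet G → m (α ⁻¹' G) ≤ (C : ℝ≥0∞) * m G) →
      ∀ A : Lp ℝ 1 m →L[ℝ] Lp ℝ 1 m,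
        (∀ (f : X → ℝ) (hf : Integrable f m), Measurable f →
          ⇑(A (hf.toL1 f)) =ᵐ[m] f ∘ α) →
        ‖A‖ ≤ (C : ℝ)) := by
  simpa only [isShiftOperator_L1_iff, div_one, ENNReal.toReal_one, Real.rpow_one] using
    (shiftOperator_bounded_iff_general (E := ℝ) (𝕜 := ℝ) (ν := m) ENNReal.one_ne_top
      (hα.aemeasurable (μ := m))).imp_right fun hnorm C (_ : 0 < C) => hnorm C
end
end

section
/- For any φ ∈ L^∞(X, m), any α-invariant measure μ ∈ M_α(X, m), any natural number n and any ε > 0, there exists a measurable partition of unity D on X such that ε + (1/n)·ln‖A_φⁿ‖ ≥ μ[φ] + (1/n)·τₙ(μ, D). -/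
/-!
Choose `D` so fine that `S_n φ` oscillates by at most `n ε` on the support of each `gᵢ`, and let
`cᵢ` be a lower bound of `S_n φ` on the support of `gᵢ`. For `‖f‖ = 1`, the concavity of the
logarithm bounds `∑ μ[gᵢ] ln (e^{cᵢ} ∫ gᵢ |f ∘ αⁿ| dm / μ[gᵢ])` by
`ln ∑ e^{cᵢ} ∫ gᵢ |f ∘ αⁿ| dm ≤ ln ‖A_φⁿ f‖ ≤ ln ‖A_φⁿ‖`, while
`∑ μ[gᵢ] cᵢ ≥ μ[S_n φ] - n ε = n μ[φ] - n ε` because `μ` is positive, normalized and invariant.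
-/

open MeasureTheory Filter
open scoped ENNReal NNReal

noncomputable section

/-- The Birkhoff sum `S_n φ (x) = φ(x) + φ(α x) + ⋯ + φ(α^{n-1} x)`. -/
def birkhoff {X : Type*} (α : X → X) (φ : X → ℝ) (n : ℕ) (x : X) : ℝ :=
  ∑ i ∈ Finset.range n, φ (α^[i] x)

/-- Boundedness of the shift operator `A f = f ∘ α` on `L¹(X, m)`:
there is `C > 0` with `m (α⁻¹ G) ≤ C · m G` for all measurable `G`. -/
def ShiftBounded {X : Type*} [MeasurableSpace X] (m : Measure X) (α : X → X) : Prop :=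
  ∃ C : ℝ≥0, 0 < C ∧ ∀ G : Set X, MeasurableSet G → m (α ⁻¹' G) ≤ (C : ℝ≥0∞) * m G

/-- The operator norm `‖(e^ψ A^s)^k‖` of the `k`-th power of the weighted shift operator
`e^ψ A^s` (with base shift `α^[s]`) acting on `L¹(X, m)`, computed as the supremum of
`‖(e^ψ A^s)^k f‖₁` over `f` with `‖f‖₁ = 1`. -/
def weightedOpNorm {X : Type*} [MeasurableSpace X] (m : Measure X) (α : X → X) (s : ℕ)
    (ψ : X → ℝ) (k : ℕ) : ℝ :=
  sSup {r : ℝ | ∃ f : X → ℝ, Integrable f m ∧ (∫ x, |f x| ∂m) = 1 ∧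
    r = ∫ x, Real.exp (∑ j ∈ Finset.range k, ψ (α^[s * j] x)) * |f (α^[s * k] x)| ∂m}

/-- `λ(ψ, A^s)`: the logarithm of the spectral radius of `e^ψ A^s` on `L¹(X, m)`. -/
def spectralPotentialBase {X : Type*} [MeasurableSpace X] (m : Measure X) (α : X → X)
    (s : ℕ) (ψ : X → ℝ) : ℝ :=
  limUnder atTop fun k : ℕ => Real.log (weightedOpNorm m α s ψ k) / (k : ℝ)

/-- The spectral potential `λ(φ) = lim (1/n) ln ‖A_φⁿ‖`. -/
def spectralPotential {X : Type*} [MeasurableSpace X] (m : Measure X) (α : X → X)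
    (φ : X → ℝ) : ℝ :=
  spectralPotentialBase m α 1 φ

/-- A functional on `L^∞(X, m)` is positive if it is nonnegative on nonnegative functions. -/
def IsPositiveFunctional {X : Type*} [MeasurableSpace X] (m : Measure X)
    (μ : Lp ℝ ⊤ m → ℝ) : Prop :=
  ∀ φ : Lp ℝ ⊤ m, (0 : X → ℝ) ≤ᵐ[m] ⇑φ → 0 ≤ μ φ

/-- A functional on `L^∞(X, m)` is normalized if its value on the unit function is `1`. -/
def IsNormalizedFunctional {X : Type*} [MeasurableSpace X] (m : Measure X)
    (μ : Lp ℝ ⊤ m → ℝ) : Prop :=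
  ∀ φ : Lp ℝ ⊤ m, ⇑φ =ᵐ[m] (fun _ => (1 : ℝ)) → μ φ = 1

/-- A functional `μ` on `L^∞(X, m)` is `α`-invariant if `μ[f ∘ α] = μ[f]`. -/
def IsInvariantFunctional {X : Type*} [MeasurableSpace X] (m : Measure X) (α : X → X)
    (μ : Lp ℝ ⊤ m → ℝ) : Prop :=
  ∀ φ ψ : Lp ℝ ⊤ m, ⇑ψ =ᵐ[m] (fun x => φ (α x)) → μ ψ = μ φ

/-- `μ ∈ M_α(X, m)`: positive, normalized and `α`-invariant. -/
def MemMalpha {X : Type*} [MeasurableSpace X] (m : Measure X) (α : X → X)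
    (μ : Lp ℝ ⊤ m → ℝ) : Prop :=
  IsPositiveFunctional m μ ∧ IsNormalizedFunctional m μ ∧ IsInvariantFunctional m α μ

/-- A measurable partition of unity on `X` made of nonnegative elements of `L^∞(X, m)`
summing to `1`. -/
structure PartUnity {X : Type*} [MeasurableSpace X] (m : Measure X) where
  k : ℕ
  g : Fin k → Lp ℝ ⊤ m
  nonneg : ∀ i, (0 : X → ℝ) ≤ᵐ[m] ⇑(g i)
  sum_one : ∀ᵐ x ∂m, (∑ i, (g i : Lp ℝ ⊤ m) x) = 1

/-- The summand `a · ln (r / a)` with the conventions: it is `0` if `a = 0`, and `-∞` if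
`a ≠ 0` and `r = 0`. -/
def entTerm (a r : ℝ) : EReal :=
  if a = 0 then 0 else if r = 0 then ⊥ else ((a * Real.log (r / a) : ℝ) : EReal)

/-- `τₙ(μ, D)`. -/
def tauN {X : Type*} [MeasurableSpace X] (m : Measure X) (α : X → X)
    (μ : Lp ℝ ⊤ m → ℝ) (n : ℕ) (D : PartUnity m) : EReal :=
  sSup {r : EReal | ∃ f : X → ℝ, Integrable f m ∧ (∫ x, |f x| ∂m) = 1 ∧
    r = ∑ i, entTerm (μ (D.g i)) (∫ x, (D.g i : Lp ℝ ⊤ m) x * |f (α^[n] x)| ∂m)}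

/-- The t-entropy `τ(μ) = inf_{n, D} τₙ(μ, D) / n`. -/
def tEntropy {X : Type*} [MeasurableSpace X] (m : Measure X) (α : X → X)
    (μ : Lp ℝ ⊤ m → ℝ) : EReal :=
  ⨅ (n : ℕ) (_ : 0 < n) (D : PartUnity m), (((n : ℝ)⁻¹ : ℝ) : EReal) * tauN m α μ n D

/-- The t-entropy extended by `τ(μ) = -∞` outside `M_α(X, m)`. -/
def tEntropyExt {X : Type*} [MeasurableSpace X] (m : Measure X) (α : X → X)
    (μ : Lp ℝ ⊤ m → ℝ) : EReal :=
  @ite _ (MemMalpha m α μ) (Classical.dec _) (tEntropy m α μ) ⊥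


section EssentiallyBounded

lemma memLp_top_comp {X Y E : Type*} [MeasurableSpace X] [MeasurableSpace Y]
    [NormedAddCommGroup E] {m : Measure X} {ν : Measure Y} {f : Y → E} {β : X → Y}
    (hf : MemLp f ⊤ ν) (hβ : Measure.QuasiMeasurePreserving β m ν) :
    MemLp (fun x => f (β x)) ⊤ m :=
  memLp_top_of_bound (hf.aestronglyMeasurable.comp_quasiMeasurePreserving hβ) _
    (hβ.ae (ae_le_lpNorm_exponent_top hf))

lemma memLp_top_exp {X : Type*} [MeasurableSpace X] {m : Measure X} {f : X → ℝ}
    (hf : MemLp f ⊤ m) : MemLp (fun x => Real.exp (f x)) ⊤ m := by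
  refine memLp_top_of_bound (Real.continuous_exp.comp_aestronglyMeasurable hf.aestronglyMeasurable)
    (Real.exp (lpNorm f ⊤ m)) ?_
  filter_upwards [ae_le_lpNorm_exponent_top hf] with x hx
  simpa using (le_abs_self (f x)).trans hx

lemma memLp_top_ite_eq {X ι : Type*} [MeasurableSpace X] [MeasurableSpace ι]
    [MeasurableSingletonClass ι] [DecidableEq ι] {m : Measure X} {q : X → ι} (hq : Measurable q)
    (i : ι) : MemLp (fun x => if q x = i then (1 : ℝ) else 0) ⊤ m :=
  memLp_top_of_bound (Measurable.ite (hq (measurableSet_singleton i)) measurable_const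
    measurable_const).aestronglyMeasurable 1 (ae_of_all _ fun x => by split_ifs <;> simp)

lemma memLp_top_birkhoff {X : Type*} [MeasurableSpace X] {m : Measure X} {α : X → X} {φ : X → ℝ}
    (hα : Measure.QuasiMeasurePreserving α m m) (hφ : MemLp φ ⊤ m) (n : ℕ) :
    MemLp (birkhoff α φ n) ⊤ m :=
  memLp_finsetSum _ fun i _ => memLp_top_comp hφ (hα.iterate i)

end EssentiallyBounded

namespace ShiftBounded

variable {X : Type*} [MeasurableSpace X] {m : Measure X} {α : X → X}

lemma iterate (hα : Measurable α) (hbdd : ShiftBounded m α) (n : ℕ) :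
    ShiftBounded m (α^[n]) := by
  obtain ⟨C, hC, hαC⟩ := hbdd
  refine ⟨C ^ n, pow_pos hC n, ?_⟩
  induction n with
  | zero => simp
  | succ k ih =>
    intro G hG
    calc m (α^[k + 1] ⁻¹' G)
        = m (α^[k] ⁻¹' (α ⁻¹' G)) := by rw [Function.iterate_succ', Set.preimage_comp]
      _ ≤ (C ^ k : ℝ≥0) * (C * m G) := (ih _ (hα hG)).trans (by gcongr; exact hαC G hG)
      _ = (C ^ (k + 1) : ℝ≥0) * m G := by rw [← mul_assoc, pow_succ, ENNReal.coe_mul]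

lemma exists_map_le (hα : Measurable α) (hbdd : ShiftBounded m α) :
    ∃ C : ℝ≥0, m.map α ≤ C • m := by
  obtain ⟨C, -, hC⟩ := hbdd
  exact ⟨C, Measure.le_iff.2 fun G hG => by simpa [Measure.map_apply hα hG] using hC G hG⟩

lemma quasiMeasurePreserving (hα : Measurable α) (hbdd : ShiftBounded m α) :
    Measure.QuasiMeasurePreserving α m m :=
  let ⟨_, hC⟩ := hbdd.exists_map_le hα
  ⟨hα, Measure.absolutelyContinuous_of_le_smul hC⟩

lemma integrable_comp {E : Type*} [NormedAddCommGroup E] (hα : Measurable α)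
    (hbdd : ShiftBounded m α) {f : X → E} (hf : Integrable f m) :
    Integrable (fun x => f (α x)) m :=
  let ⟨_, hC⟩ := hbdd.exists_map_le hα
  ((hf.smul_measure ENNReal.coe_ne_top).mono_measure hC).comp_measurable hα

lemma exists_integral_comp_le (hα : Measurable α) (hbdd : ShiftBounded m α) :
    ∃ C : ℝ≥0, ∀ f : X → ℝ, 0 ≤ f → Integrable f m → ∫ x, f (α x) ∂m ≤ C * ∫ x, f x ∂m := by
  obtain ⟨C, hC⟩ := hbdd.exists_map_le hα
  refine ⟨C, fun f hf0 hf => ?_⟩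
  have hfC : Integrable f (C • m) := hf.smul_measure ENNReal.coe_ne_top
  calc ∫ x, f (α x) ∂m
      = ∫ x, f x ∂(m.map α) :=
        (integral_map hα.aemeasurable (hfC.mono_measure hC).aestronglyMeasurable).symm
    _ ≤ ∫ x, f x ∂(C • m) := integral_mono_measure hC (ae_of_all _ hf0) hfC
    _ = C * ∫ x, f x ∂m := integral_smul_nnreal_measure f C

lemma integrable_mul_abs_comp (hα : Measurable α) (hbdd : ShiftBounded m α) {w f : X → ℝ}
    (hw : MemLp w ⊤ m) (hf : Integrable f m) : Integrable (fun x => w x * |f (α x)|) m :=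
  (hbdd.integrable_comp hα hf.abs).mul_of_top_right hw

lemma exists_integral_mul_abs_comp_le (hα : Measurable α) (hbdd : ShiftBounded m α) {w : X → ℝ}
    (hw : MemLp w ⊤ m) :
    ∃ C : ℝ, ∀ f : X → ℝ, Integrable f m → ∫ x, w x * |f (α x)| ∂m ≤ C * ∫ x, |f x| ∂m := by
  obtain ⟨C, hC⟩ := hbdd.exists_integral_comp_le hα
  refine ⟨lpNorm w ⊤ m * C, fun f hf => ?_⟩
  calc ∫ x, w x * |f (α x)| ∂m
      ≤ ∫ x, lpNorm w ⊤ m * |f (α x)| ∂m := by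
        refine integral_mono_ae (hbdd.integrable_mul_abs_comp hα hw hf)
          ((hbdd.integrable_comp hα hf.abs).const_mul _) ?_
        filter_upwards [ae_le_lpNorm_exponent_top hw] with x hx
        exact mul_le_mul_of_nonneg_right ((le_abs_self _).trans hx) (abs_nonneg _)
    _ = lpNorm w ⊤ m * ∫ x, |f (α x)| ∂m := integral_const_mul _ _
    _ ≤ lpNorm w ⊤ m * (C * ∫ x, |f x| ∂m) := by
        gcongr
        · exact lpNorm_nonneg
        · exact hC _ (fun x => abs_nonneg (f x)) hf.abs
    _ = lpNorm w ⊤ m * C * ∫ x, |f x| ∂m := (mul_assoc _ _ _).symm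

end ShiftBounded

section WeightedOpNorm

variable {X : Type*} [MeasurableSpace X] {m : Measure X} {α : X → X}

lemma weightedOpNorm_nonneg (s : ℕ) (ψ : X → ℝ) (k : ℕ) : 0 ≤ weightedOpNorm m α s ψ k := by
  refine Real.sSup_nonneg ?_
  rintro _ ⟨f, -, -, rfl⟩
  exact integral_nonneg fun x => by positivity

lemma integral_exp_birkhoff_le_weightedOpNorm (hα : Measurable α) (hbdd : ShiftBounded m α)
    (s : ℕ) {ψ : X → ℝ} (hψ : MemLp ψ ⊤ m) (k : ℕ) {f : X → ℝ} (hf : Integrable f m)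
    (hf1 : ∫ x, |f x| ∂m = 1) :
    ∫ x, Real.exp (birkhoff (α^[s]) ψ k x) * |f ((α^[s])^[k] x)| ∂m ≤
      weightedOpNorm m α s ψ k := by
  have hs := hbdd.iterate hα s
  have hw := memLp_top_exp
    (memLp_top_birkhoff (hs.quasiMeasurePreserving (hα.iterate s)) hψ k)
  obtain ⟨C, hC⟩ := (hs.iterate (hα.iterate s) k).exists_integral_mul_abs_comp_le
    ((hα.iterate s).iterate k) hw
  simp only [weightedOpNorm, Function.iterate_mul]
  refine le_csSup ⟨C, ?_⟩ ⟨f, hf, hf1, rfl⟩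
  rintro _ ⟨g, hg, hg1, rfl⟩
  simpa [hg1, birkhoff] using hC g hg

end WeightedOpNorm

section Functionals

variable {X : Type*} [MeasurableSpace X] {m : Measure X} {α : X → X}

lemma IsPositiveFunctional.mono {μ : Lp ℝ ⊤ m →ₗ[ℝ] ℝ} (hμ : IsPositiveFunctional m μ)
    {f g : Lp ℝ ⊤ m} (hfg : f ≤ᵐ[m] g) : μ f ≤ μ g := by
  rw [← sub_nonneg, ← map_sub]
  refine hμ _ ?_
  filter_upwards [hfg, Lp.coeFn_sub g f] with x hx hsub
  rw [hsub]
  exact sub_nonneg.2 hx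

lemma IsNormalizedFunctional.sum_apply_eq_one {μ : Lp ℝ ⊤ m →ₗ[ℝ] ℝ}
    (hμ : IsNormalizedFunctional m μ) (D : PartUnity m) : ∑ i, μ (D.g i) = 1 := by
  rw [← map_sum]
  refine hμ _ ?_
  filter_upwards [Lp.coeFn_fun_finsetSum Finset.univ D.g, D.sum_one] with x hx hx1
  rw [hx, hx1]

lemma IsInvariantFunctional.iterate {μ : Lp ℝ ⊤ m → ℝ} (hμ : IsInvariantFunctional m α μ)
    (hα : Measure.QuasiMeasurePreserving α m m) (n : ℕ) :
    IsInvariantFunctional m (α^[n]) μ := by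
  induction n with
  | zero => exact fun φ ψ h => congrArg μ (Lp.ext h)
  | succ k ih =>
    intro φ ψ h
    have hφα := memLp_top_comp (Lp.memLp φ) hα
    calc μ ψ = μ (hφα.toLp _) := by
          refine ih _ _ ?_
          filter_upwards [h, (hα.iterate k).ae hφα.coeFn_toLp] with x hx hx'
          rw [hx, hx', Function.iterate_succ_apply']
      _ = μ φ := hμ _ _ hφα.coeFn_toLp

lemma IsInvariantFunctional.apply_birkhoff {μ : Lp ℝ ⊤ m →ₗ[ℝ] ℝ}
    (hμ : IsInvariantFunctional m α μ) (hα : Measure.QuasiMeasurePreserving α m m)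
    (φ : Lp ℝ ⊤ m) (n : ℕ) :
    μ ((memLp_top_birkhoff hα (Lp.memLp φ) n).toLp) = n * μ φ := by
  have hφ (i : ℕ) := memLp_top_comp (Lp.memLp φ) (hα.iterate i)
  have hsum : (memLp_top_birkhoff hα (Lp.memLp φ) n).toLp =
      ∑ i ∈ Finset.range n, (hφ i).toLp := by
    refine Lp.ext ?_
    filter_upwards [(memLp_top_birkhoff hα (Lp.memLp φ) n).coeFn_toLp,
      Lp.coeFn_fun_finsetSum (Finset.range n) fun i => (hφ i).toLp,
      ae_all_iff.2 fun i => (hφ i).coeFn_toLp] with x hS hx hφx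
    simp only [hS, hx, hφx, birkhoff]
  have hterm (i : ℕ) : μ (hφ i).toLp = μ φ := hμ.iterate hα i _ _ (hφ i).coeFn_toLp
  simp [hsum, hterm]

end Functionals

namespace PartUnity

variable {X : Type*} [MeasurableSpace X] {m : Measure X}

/-- The partition of unity formed by the indicators of the level sets of a measurable map to a
finite set. -/
def ofFin (m : Measure X) {k : ℕ} (q : X → Fin k) (hq : Measurable q) : PartUnity m where
  k := k
  g i := (memLp_top_ite_eq (m := m) hq i).toLp
  nonneg i := by
    filter_upwards [(memLp_top_ite_eq hq i).coeFn_toLp] with x hx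
    rw [hx, Pi.zero_apply]
    positivity
  sum_one := by
    filter_upwards [ae_all_iff.2 fun i => (memLp_top_ite_eq hq i).coeFn_toLp] with x hx
    simp [hx]

lemma ae_ofFin_apply {k : ℕ} (q : X → Fin k) (hq : Measurable q) :
    ∀ᵐ x ∂m, ∀ i : Fin k, (ofFin m q hq).g i x = if q x = i then 1 else 0 :=
  ae_all_iff.2 fun i => (memLp_top_ite_eq hq i).coeFn_toLp

/-- `D` is adapted to `S` with lower values `c` and precision `δ` if, almost everywhere on the
support of each member `D.g i`, the function `S` takes values in `[c i, c i + δ]`. -/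
def Adapted (D : PartUnity m) (S : X → ℝ) (c : Fin D.k → ℝ) (δ : ℝ) : Prop :=
  ∀ᵐ x ∂m, ∀ i, D.g i x ≠ 0 → S x ∈ Set.Icc (c i) (c i + δ)

lemma Adapted.ae_sum_exp_mul_le {D : PartUnity m} {S : X → ℝ} {c : Fin D.k → ℝ} {δ : ℝ}
    (hD : D.Adapted S c δ) : ∀ᵐ x ∂m, ∑ i, Real.exp (c i) * D.g i x ≤ Real.exp (S x) := by
  filter_upwards [hD, ae_all_iff.2 D.nonneg, D.sum_one] with x hx h0 h1
  calc ∑ i, Real.exp (c i) * D.g i x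
      ≤ ∑ i, Real.exp (S x) * D.g i x := by
        refine Finset.sum_le_sum fun i _ => ?_
        rcases eq_or_ne (D.g i x) 0 with hi | hi
        · simp [hi]
        · exact mul_le_mul_of_nonneg_right (Real.exp_le_exp.2 (hx i hi).1) (h0 i)
    _ = Real.exp (S x) := by rw [← Finset.mul_sum, h1, mul_one]

lemma Adapted.ae_le_sum_mul {D : PartUnity m} {S : X → ℝ} {c : Fin D.k → ℝ} {δ : ℝ}
    (hD : D.Adapted S c δ) : ∀ᵐ x ∂m, S x ≤ ∑ i, (c i + δ) * D.g i x := by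
  filter_upwards [hD, ae_all_iff.2 D.nonneg, D.sum_one] with x hx h0 h1
  calc S x = ∑ i, S x * D.g i x := by rw [← Finset.mul_sum, h1, mul_one]
    _ ≤ ∑ i, (c i + δ) * D.g i x := by
        refine Finset.sum_le_sum fun i _ => ?_
        rcases eq_or_ne (D.g i x) 0 with hi | hi
        · simp [hi]
        · exact mul_le_mul_of_nonneg_right (hx i hi).2 (h0 i)

lemma Adapted.apply_le {D : PartUnity m} {S : Lp ℝ ⊤ m} {c : Fin D.k → ℝ} {δ : ℝ}
    (hD : D.Adapted S c δ) {μ : Lp ℝ ⊤ m →ₗ[ℝ] ℝ} (hpos : IsPositiveFunctional m μ)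
    (hone : IsNormalizedFunctional m μ) : μ S ≤ ∑ i, μ (D.g i) * c i + δ := by
  have hle : S ≤ᵐ[m] ↑(∑ i, (c i + δ) • D.g i) := by
    filter_upwards [hD.ae_le_sum_mul,
      Lp.coeFn_fun_finsetSum Finset.univ fun i => (c i + δ) • D.g i,
      ae_all_iff.2 fun i => Lp.coeFn_smul (c i + δ) (D.g i)] with x hx hsum hsmul
    rw [hsum]
    simpa only [hsmul, Pi.smul_apply, smul_eq_mul] using hx
  calc μ S ≤ μ (∑ i, (c i + δ) • D.g i) := hpos.mono hle
    _ = ∑ i, μ (D.g i) * c i + δ * ∑ i, μ (D.g i) := by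
        simp only [map_sum, map_smul, smul_eq_mul, Finset.mul_sum, ← Finset.sum_add_distrib]
        exact Finset.sum_congr rfl fun i _ => by ring
    _ = ∑ i, μ (D.g i) * c i + δ := by rw [hone.sum_apply_eq_one, mul_one]

end PartUnity

lemma exists_measurable_fin_approx {X : Type*} [MeasurableSpace X] {m : Measure X} {f : X → ℝ}
    (hf : Measurable f) {M : ℝ} (hM : ∀ᵐ x ∂m, |f x| ≤ M) {δ : ℝ} (hδ : 0 < δ) :
    ∃ (k : ℕ) (q : X → Fin k) (c : Fin k → ℝ), Measurable q ∧
      ∀ᵐ x ∂m, f x ∈ Set.Icc (c (q x)) (c (q x) + δ) := by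
  let p : X → ℕ := fun x => ⌊(f x + M) / δ⌋₊
  let K : ℕ := ⌊2 * M / δ⌋₊
  have hp : Measurable p := Nat.measurable_floor.comp ((hf.add_const M).div_const δ)
  refine ⟨K + 1, fun x => Fin.ofNat (K + 1) (p x), fun i => δ * (i : ℕ) - M,
    (Measurable.of_discrete (f := Fin.ofNat (K + 1))).comp hp, ?_⟩
  filter_upwards [hM] with x hx
  obtain ⟨hlow, hupp⟩ := abs_le.1 hx
  have hpK : p x ≤ K := Nat.floor_le_floor (by gcongr; linarith)
  have hfloor : p x * δ ≤ f x + M :=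
    (le_div_iff₀ hδ).1 (Nat.floor_le (div_nonneg (by linarith) hδ.le))
  have hceil : f x + M < (p x + 1) * δ := (div_lt_iff₀ hδ).1 (Nat.lt_floor_add_one _)
  simp only [Fin.val_ofNat, Nat.mod_eq_of_lt (Nat.lt_succ_of_le hpK)]
  constructor <;> linarith

lemma PartUnity.exists_adapted {X : Type*} [MeasurableSpace X] {m : Measure X} (S : Lp ℝ ⊤ m)
    {δ : ℝ} (hδ : 0 < δ) : ∃ (D : PartUnity m) (c : Fin D.k → ℝ), D.Adapted S c δ := by
  obtain ⟨k, q, c, hq, hqc⟩ := exists_measurable_fin_approx (Lp.stronglyMeasurable S).measurable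
    (ae_le_lpNorm_exponent_top (Lp.memLp S)) hδ
  refine ⟨ofFin m q hq, c, ?_⟩
  filter_upwards [hqc, ae_ofFin_apply q hq] with x hx hg i hi
  have hqi : q x = i := by simpa [hg i] using hi
  rwa [← hqi]

section EntropyTerm

lemma entTerm_le_mul_sub {a r s : ℝ} (ha : 0 ≤ a) (hr : 0 ≤ r) (hs : 0 < s) :
    entTerm a r ≤ ((s * r - a - a * Real.log s : ℝ) : EReal) := by
  unfold entTerm
  split_ifs with ha0 hr0
  · rw [ha0]
    exact_mod_cast (by simpa using mul_nonneg hs.le hr : (0 : ℝ) ≤ s * r - 0 - 0 * Real.log s)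
  · exact bot_le
  · have : 0 < a := ha.lt_of_ne' ha0
    have : 0 < r := hr.lt_of_ne' hr0
    have hlog : Real.log s + Real.log (r / a) ≤ s * (r / a) - 1 := by
      rw [← Real.log_mul hs.ne' (by positivity)]
      exact Real.log_le_sub_one_of_pos (by positivity)
    have hmul := mul_le_mul_of_nonneg_left hlog ha
    have hcancel : a * (s * (r / a) - 1) = s * r - a := by field_simp
    exact_mod_cast (by linarith : a * Real.log (r / a) ≤ s * r - a - a * Real.log s)

lemma sum_entTerm_le {ι : Type*} [Fintype ι] {a r c : ι → ℝ} {N : ℝ} (ha : ∀ i, 0 ≤ a i)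
    (hr : ∀ i, 0 ≤ r i) (ha1 : ∑ i, a i = 1) (hN : 0 < N)
    (hrN : ∑ i, Real.exp (c i) * r i ≤ N) :
    ∑ i, entTerm (a i) (r i) ≤ ((Real.log N - ∑ i, a i * c i : ℝ) : EReal) := by
  have hterm (i : ι) : entTerm (a i) (r i) ≤
      ((Real.exp (c i) * r i / N - a i - a i * (c i - Real.log N) : ℝ) : EReal) := by
    convert entTerm_le_mul_sub (ha i) (hr i) (div_pos (Real.exp_pos (c i)) hN) using 2
    rw [Real.log_div (Real.exp_ne_zero _) hN.ne', Real.log_exp, div_mul_eq_mul_div]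
  let coeHom : ℝ →+ EReal := ⟨⟨Real.toEReal, EReal.coe_zero⟩, EReal.coe_add⟩
  calc ∑ i, entTerm (a i) (r i)
      ≤ ∑ i, coeHom (Real.exp (c i) * r i / N - a i - a i * (c i - Real.log N)) :=
        Finset.sum_le_sum fun i _ => hterm i
    _ = ((∑ i, (Real.exp (c i) * r i / N - a i - a i * (c i - Real.log N)) : ℝ) : EReal) :=
        (map_sum coeHom _ _).symm
    _ = (((∑ i, Real.exp (c i) * r i) / N - 1 - ∑ i, a i * c i + Real.log N : ℝ) : EReal) := by
        simp only [mul_sub, Finset.sum_sub_distrib, ← Finset.sum_div, ← Finset.sum_mul, ha1]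
        congr 1
        ring
    _ ≤ ((Real.log N - ∑ i, a i * c i : ℝ) : EReal) := by
        have hdiv := (div_le_one hN).2 hrN
        exact EReal.coe_le_coe_iff.2 (by linarith)

end EntropyTerm

section Young

variable {X : Type*} [MeasurableSpace X] {m : Measure X} {α : X → X}

lemma PartUnity.Adapted.sum_exp_mul_integral_le {D : PartUnity m} {S : X → ℝ} {c : Fin D.k → ℝ}
    {δ : ℝ} (hD : D.Adapted S c δ) (hS : MemLp S ⊤ m) {h : X → ℝ} (hh : Integrable h m)
    (hh0 : 0 ≤ᵐ[m] h) :
    ∑ i, Real.exp (c i) * ∫ x, D.g i x * h x ∂m ≤ ∫ x, Real.exp (S x) * h x ∂m := by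
  have hint (i : Fin D.k) : Integrable (fun x => Real.exp (c i) * (D.g i x * h x)) m :=
    (hh.mul_of_top_right (Lp.memLp (D.g i))).const_mul _
  calc ∑ i, Real.exp (c i) * ∫ x, D.g i x * h x ∂m
      = ∫ x, ∑ i, Real.exp (c i) * (D.g i x * h x) ∂m := by
        simp only [integral_finsetSum _ fun i _ => hint i, integral_const_mul]
    _ ≤ ∫ x, Real.exp (S x) * h x ∂m := by
        refine integral_mono_ae (integrable_finsetSum _ fun i _ => hint i)
          (hh.mul_of_top_right (memLp_top_exp hS)) ?_
        filter_upwards [hD.ae_sum_exp_mul_le, hh0] with x hx hx0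
        simpa only [← mul_assoc, ← Finset.sum_mul] using mul_le_mul_of_nonneg_right hx hx0

lemma PartUnity.Adapted.tauN_le {D : PartUnity m} {S : Lp ℝ ⊤ m} {c : Fin D.k → ℝ} {δ : ℝ}
    (hD : D.Adapted S c δ) (hα : Measurable α) (hbdd : ShiftBounded m α) {n : ℕ} {N : ℝ}
    (hN : 0 < N)
    (hSN : ∀ f : X → ℝ, Integrable f m → ∫ x, |f x| ∂m = 1 →
      ∫ x, Real.exp (S x) * |f (α^[n] x)| ∂m ≤ N)
    {μ : Lp ℝ ⊤ m →ₗ[ℝ] ℝ} (hpos : IsPositiveFunctional m μ)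
    (hone : IsNormalizedFunctional m μ) :
    tauN m α μ n D ≤ ((Real.log N - μ S + δ : ℝ) : EReal) := by
  refine sSup_le ?_
  rintro _ ⟨f, hf, hf1, rfl⟩
  have hfn : Integrable (fun x => |f (α^[n] x)|) m :=
    (hbdd.iterate hα n).integrable_comp (hα.iterate n) hf.abs
  have hr (i : Fin D.k) : 0 ≤ ∫ x, D.g i x * |f (α^[n] x)| ∂m := by
    refine integral_nonneg_of_ae ?_
    filter_upwards [D.nonneg i] with x hx using mul_nonneg hx (abs_nonneg _)
  have hrN : ∑ i, Real.exp (c i) * ∫ x, D.g i x * |f (α^[n] x)| ∂m ≤ N :=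
    (hD.sum_exp_mul_integral_le (Lp.memLp S) hfn (ae_of_all _ fun _ => abs_nonneg _)).trans
      (hSN f hf hf1)
  refine (sum_entTerm_le (fun i => hpos _ (D.nonneg i)) hr (hone.sum_apply_eq_one D) hN
    hrN).trans (EReal.coe_le_coe_iff.2 ?_)
  linarith [hD.apply_le hpos hone]

lemma exists_partUnity_forall_tauN_le (hα : Measurable α) (hbdd : ShiftBounded m α)
    (φ : Lp ℝ ⊤ m) (n : ℕ) {δ : ℝ} (hδ : 0 < δ) :
    ∃ D : PartUnity m, ∀ μ : Lp ℝ ⊤ m →ₗ[ℝ] ℝ,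
      IsPositiveFunctional m μ → IsNormalizedFunctional m μ →
      tauN m α μ n D ≤ ((Real.log (weightedOpNorm m α 1 φ n) -
        μ ((memLp_top_birkhoff (hbdd.quasiMeasurePreserving hα) (Lp.memLp φ) n).toLp) + δ : ℝ) :
          EReal) := by
  have hS := memLp_top_birkhoff (hbdd.quasiMeasurePreserving hα) (Lp.memLp φ) n
  obtain ⟨D, c, hD⟩ := PartUnity.exists_adapted hS.toLp hδ
  -- If the norm vanishes, then `τₙ = -∞` and any positive bound is admissible; `N = 1` matches the
  -- junk value `Real.log 0 = 0`.
  obtain ⟨N, hN, hle, hlog⟩ : ∃ N : ℝ, 0 < N ∧ weightedOpNorm m α 1 φ n ≤ N ∧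
      Real.log N = Real.log (weightedOpNorm m α 1 φ n) := by
    rcases (weightedOpNorm_nonneg (m := m) (α := α) 1 φ n).eq_or_lt with h | h
    · exact ⟨1, one_pos, by simp [← h], by simp [← h]⟩
    · exact ⟨_, h, le_rfl, rfl⟩
  have hSN (f : X → ℝ) (hf : Integrable f m) (hf1 : ∫ x, |f x| ∂m = 1) :
      ∫ x, Real.exp (hS.toLp _ x) * |f (α^[n] x)| ∂m ≤ N := by
    calc ∫ x, Real.exp (hS.toLp _ x) * |f (α^[n] x)| ∂m
        = ∫ x, Real.exp (birkhoff α φ n x) * |f (α^[n] x)| ∂m := by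
          refine integral_congr_ae ?_
          filter_upwards [hS.coeFn_toLp] with x hx
          rw [hx]
      _ ≤ weightedOpNorm m α 1 φ n :=
          integral_exp_birkhoff_le_weightedOpNorm hα hbdd 1 (Lp.memLp φ) n hf hf1
      _ ≤ N := hle
  refine ⟨D, fun μ hpos hone => ?_⟩
  rw [← hlog]
  exact hD.tauN_le hα hbdd hN hSN hpos hone

theorem exists_partition_young_ineq_general (hα : Measurable α) (hbdd : ShiftBounded m α)
    (φ : Lp ℝ ⊤ m) (n : ℕ) (hn : 0 < n) (ε : ℝ) (hε : 0 < ε) :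
    ∃ D : PartUnity m, ∀ μ : Lp ℝ ⊤ m →ₗ[ℝ] ℝ, MemMalpha m α μ →
      ((μ φ : ℝ) : EReal) + (((n : ℝ)⁻¹ : ℝ) : EReal) * tauN m α μ n D ≤
        ((ε + Real.log (weightedOpNorm m α 1 φ n) / (n : ℝ) : ℝ) : EReal) := by
  have hn' : (0 : ℝ) < n := by exact_mod_cast hn
  obtain ⟨D, hD⟩ := exists_partUnity_forall_tauN_le hα hbdd φ n (mul_pos hn' hε)
  refine ⟨D, fun μ ⟨hpos, hone, hinv⟩ => ?_⟩
  have htau := hD μ hpos hone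
  rw [hinv.apply_birkhoff (hbdd.quasiMeasurePreserving hα)] at htau
  set L := weightedOpNorm m α 1 φ n
  calc ((μ φ : ℝ) : EReal) + (((n : ℝ)⁻¹ : ℝ) : EReal) * tauN m α μ n D
      ≤ (μ φ : EReal) + ((n : ℝ)⁻¹ : ℝ) * ((Real.log L - n * μ φ + n * ε : ℝ) : EReal) := by
        gcongr
    _ = ((ε + Real.log L / n : ℝ) : EReal) := by
        rw [← EReal.coe_mul, ← EReal.coe_add]
        congr 1
        field_simp
        ring

end Young

/-- **Lemma 3, inequality (10)**: for any `φ ∈ L^∞(X, m)`, `μ ∈ M_α(X, m)`, `n ∈ ℕ` and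
`ε > 0` there is a measurable partition of unity `D` with
`ε + (1/n)·ln‖A_φⁿ‖ ≥ μ[φ] + (1/n)·τₙ(μ, D)`. -/
theorem exists_partition_young_ineq
    {X : Type*} [MeasurableSpace X] (m : Measure X) (α : X → X)
    (hα : Measurable α) (hbdd : ShiftBounded m α)
    (φ : Lp ℝ ⊤ m) (μ : Lp ℝ ⊤ m →L[ℝ] ℝ) (hμ : MemMalpha m α ⇑μ)
    (n : ℕ) (hn : 0 < n) (ε : ℝ) (hε : 0 < ε) :
    ∃ D : PartUnity m,
      ((μ φ : ℝ) : EReal) + (((n : ℝ)⁻¹ : ℝ) : EReal) * tauN m α (⇑μ) n D ≤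
        ((ε + Real.log (weightedOpNorm m α 1 (⇑φ) n) / (n : ℝ) : ℝ) : EReal) := by
  obtain ⟨D, hD⟩ := exists_partition_young_ineq_general hα hbdd φ n hn ε hε
  exact ⟨D, hD μ hμ⟩

end
end
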